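/- arXiv:1610.03830 — 11 statements merged into one kernel-verified Lean document; each statement's English description precedes it below -/
import Mathlib

section
/- Let n ≥ 2 and let l : ℤ/n → {1,…,n} be a bijection (the level function of an n-crossing). Then the sizes of adjacent crossing-centered bipyramids differ by 0 or 4: for every i with 1 ≤ i ≤ n−2, |m_i(l) − m_{i+1}(l)| = 0 or |m_i(l) − m_{i+1}(l)| = 4. -/
/-- The cyclic successor `j + 1` in `ℤ/n` (modeled as `Fin n`). -/
def cyc {n : ℕ} (j : Fin n) : Fin n :=
  ⟨(j.val + 1) % n, Nat.mod_lt _ (Nat.zero_lt_of_lt j.isLt)⟩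

/-- The cyclic predecessor `j - 1` in `ℤ/n` (modeled as `Fin n`). -/
def cycPred {n : ℕ} (j : Fin n) : Fin n :=
  ⟨(j.val + (n - 1)) % n, Nat.mod_lt _ (Nat.zero_lt_of_lt j.isLt)⟩

/-- The size `m i` of the `i`-th crossing-centered bipyramid of the `n`-crossing with
level function `l : ℤ/n → {1, …, n}`:
`m_i(l) = 2·|{ j : min(l j, l (j+1)) ≤ i  and  i+1 ≤ max(l j, l (j+1)) }|`. -/
def bipSize (n : ℕ) (l : Fin n → ℕ) (i : ℕ) : ℕ :=
  2 * (Finset.univ.filter fun j : Fin n =>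
      min (l j) (l (cyc j)) ≤ i ∧ i + 1 ≤ max (l j) (l (cyc j))).card


/-- adjacent crossing-centered bipyramid sizes differ by `0` or `4`. -/
theorem adjacent_bipyramid_sizes_differ_by_zero_or_four
    (n : ℕ) (hn : 2 ≤ n) (l : Fin n → ℕ)
    (hl : Set.BijOn l Set.univ (Set.Icc 1 n))
    (i : ℕ) (hi1 : 1 ≤ i) (hi2 : i ≤ n - 2) :
    |(bipSize n l i : ℤ) - (bipSize n l (i + 1) : ℤ)| = 0 ∨
      |(bipSize n l i : ℤ) - (bipSize n l (i + 1) : ℤ)| = 4 := by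
  obtain ⟨a, -, ha⟩ := hl.surjOn (show i + 1 ∈ Set.Icc 1 n from ⟨by omega, by omega⟩)
  have inj : ∀ x y, l x = l y → x = y := fun x y h =>
    hl.injOn (Set.mem_univ x) (Set.mem_univ y) h
  have cmod : ∀ j : Fin n, (j.val + 1 < n ∧ (cyc j).val = j.val + 1) ∨
      (j.val + 1 = n ∧ (cyc j).val = 0) := by
    intro j
    have := j.isLt
    by_cases h : j.val + 1 < n
    · left; exact ⟨h, Nat.mod_eq_of_lt h⟩
    · right
      have h2 : j.val + 1 = n := by omega
      refine ⟨h2, ?_⟩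
      simp [cyc, h2]
  have cne : ∀ j : Fin n, cyc j ≠ j := by
    intro j h
    have h1 := congrArg Fin.val h
    rcases cmod j with h2 | h2 <;> omega
  have cinj : ∀ j k : Fin n, cyc j = cyc k → j = k := by
    intro j k h
    have h1 := congrArg Fin.val h
    ext
    rcases cmod j with h2 | h2 <;> rcases cmod k with h3 | h3 <;> omega
  obtain ⟨p, hp⟩ := (Finite.surjective_of_injective (f := (cyc : Fin n → Fin n))
    (fun j k h => cinj j k h)) a
  have hpa : p ≠ a := by
    rintro rfl
    exact cne _ hp
  have key : (bipSize n l i : ℤ) - (bipSize n l (i + 1) : ℤ) = 2 * ∑ j : Fin n,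
      ((if min (l j) (l (cyc j)) ≤ i ∧ i + 1 ≤ max (l j) (l (cyc j)) then (1 : ℤ) else 0) -
       (if min (l j) (l (cyc j)) ≤ i + 1 ∧ i + 1 + 1 ≤ max (l j) (l (cyc j))
         then (1 : ℤ) else 0)) := by
    simp only [bipSize, Finset.sum_sub_distrib, Finset.sum_boole]
    push_cast
    ring
  rw [← Finset.sum_subset (Finset.subset_univ {p, a}), Finset.sum_pair hpa, hp, ha] at key
  · have h1 : l p ≠ i + 1 := fun h => hpa (inj _ _ (h.trans ha.symm))
    have h2 : l (cyc a) ≠ i + 1 := fun h => cne a (inj _ _ (h.trans ha.symm))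
    rw [key]
    generalize l p = x at *
    generalize l (cyc a) = y at *
    rcases lt_or_gt_of_ne h1 with h1 | h1 <;> rcases lt_or_gt_of_ne h2 with h2 | h2
    all_goals
      split_ifs <;> first | omega | norm_num
  · intro j _ hj
    simp only [Finset.mem_insert, Finset.mem_singleton, not_or] at hj
    have h1 : l j ≠ i + 1 := fun h => hj.2 (inj _ _ (h.trans ha.symm))
    have h2 : l (cyc j) ≠ i + 1 := fun h =>
      hj.1 (cinj _ _ ((inj _ _ (h.trans ha.symm)).trans hp.symm))
    split_ifs <;> omega
end

section
/- Let n ≥ 3, let l : ℤ/n → {1,…,n} be a bijection, let 1 ≤ i ≤ n−2, and let k ∈ ℤ/n be the unique index with l(k) = i+1. If both cyclic neighbors of k lie at lower levels, i.e. l(k−1) < l(k) and l(k+1) < l(k), then m_i(l) = m_{i+1}(l) + 4. -/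
/-- if both cyclic neighbors of the strand at level `i+1` lie at lower
levels, then `m_i(l) = m_{i+1}(l) + 4`. -/
theorem bipyramid_size_drop_of_local_max
    (n : ℕ) (hn : 3 ≤ n) (l : Fin n → ℕ)
    (hl : Set.BijOn l Set.univ (Set.Icc 1 n))
    (i : ℕ) (hi1 : 1 ≤ i) (hi2 : i ≤ n - 2)
    (k : Fin n) (hk : l k = i + 1)
    (hprev : l (cycPred k) < l k) (hnext : l (cyc k) < l k) :
    bipSize n l i = bipSize n l (i + 1) + 4 := by
  have inj : ∀ a b, l a = l b → a = b := fun a b h =>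
    hl.injOn (Set.mem_univ a) (Set.mem_univ b) h
  have hcp : cyc (cycPred k) = k := by
    apply Fin.ext
    have := k.isLt
    simp only [cyc, cycPred, Nat.mod_add_mod]
    rw [show k.val + (n - 1) + 1 = k.val + n by omega, Nat.add_mod_right,
      Nat.mod_eq_of_lt this]
  have hpc : ∀ j : Fin n, cyc j = k → j = cycPred k := by
    rintro j rfl
    apply Fin.ext
    have := j.isLt
    simp only [cyc, cycPred, Nat.mod_add_mod]
    rw [show j.val + 1 + (n - 1) = j.val + n by omega, Nat.add_mod_right,
      Nat.mod_eq_of_lt this]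
  have hne : k ≠ cycPred k := by
    intro h
    rw [← h] at hprev
    omega
  have key : (Finset.univ.filter fun j : Fin n =>
      min (l j) (l (cyc j)) ≤ i ∧ i + 1 ≤ max (l j) (l (cyc j))) =
      insert k (insert (cycPred k) (Finset.univ.filter fun j : Fin n =>
      min (l j) (l (cyc j)) ≤ i + 1 ∧ i + 1 + 1 ≤ max (l j) (l (cyc j)))) := by
    ext j
    simp only [Finset.mem_filter, Finset.mem_univ, true_and, Finset.mem_insert]
    by_cases h1 : j = k
    · subst h1
      simp only [true_or, iff_true]
      omega
    by_cases h2 : j = cycPred k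
    · subst h2
      rw [hcp]
      simp only [true_or, or_true, iff_true]
      omega
    have h3 : l j ≠ i + 1 := fun h => h1 (inj _ _ (h.trans hk.symm))
    have h4 : l (cyc j) ≠ i + 1 := fun h => h2 (hpc j (inj _ _ (h.trans hk.symm)))
    simp only [h1, h2, false_or]
    omega
  unfold bipSize
  rw [key, Finset.card_insert_of_notMem, Finset.card_insert_of_notMem]
  · ring
  · simp only [Finset.mem_filter, Finset.mem_univ, true_and, hcp]
    omega
  · simp only [Finset.mem_filter, Finset.mem_univ, true_and, Finset.mem_insert, hne, false_or]
    omega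
end

section
/- Let n ≥ 3, let l : ℤ/n → {1,…,n} be a bijection, let 1 ≤ i ≤ n−2, and let k ∈ ℤ/n be the unique index with l(k) = i+1. If both cyclic neighbors of k lie at higher levels, i.e. l(k−1) > l(k) and l(k+1) > l(k), then m_{i+1}(l) = m_i(l) + 4. -/
theorem cyc_cycPred_aux {n : ℕ} (k : Fin n) : cyc (cycPred k) = k := by
  have hk := k.isLt
  apply Fin.ext
  simp only [cyc, cycPred]
  rw [Nat.mod_add_mod, show k.val + (n - 1) + 1 = k.val + n by omega, Nat.add_mod_right,
    Nat.mod_eq_of_lt hk]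

theorem cycPred_cyc_aux {n : ℕ} (k : Fin n) : cycPred (cyc k) = k := by
  have hk := k.isLt
  apply Fin.ext
  simp only [cyc, cycPred]
  rw [Nat.mod_add_mod, show k.val + 1 + (n - 1) = k.val + n by omega, Nat.add_mod_right,
    Nat.mod_eq_of_lt hk]

/-- if both cyclic neighbors of the strand at level `i+1` lie at higher
levels, then `m_{i+1}(l) = m_i(l) + 4`. -/
theorem bipyramid_size_rise_of_local_min
    (n : ℕ) (hn : 3 ≤ n) (l : Fin n → ℕ)
    (hl : Set.BijOn l Set.univ (Set.Icc 1 n))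
    (i : ℕ) (hi1 : 1 ≤ i) (hi2 : i ≤ n - 2)
    (k : Fin n) (hk : l k = i + 1)
    (hprev : l k < l (cycPred k)) (hnext : l k < l (cyc k)) :
    bipSize n l (i + 1) = bipSize n l i + 4 := by
  have hinj : ∀ a b, l a = l b → a = b := fun a b h =>
    hl.injOn (Set.mem_univ a) (Set.mem_univ b) h
  have hc := cyc_cycPred_aux k
  have hpk : cycPred k ≠ k := by
    intro h
    rw [h] at hprev
    exact lt_irrefl _ hprev
  have key : (Finset.univ.filter fun j : Fin n =>
      min (l j) (l (cyc j)) ≤ i + 1 ∧ i + 1 + 1 ≤ max (l j) (l (cyc j))) =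
      insert k (insert (cycPred k) (Finset.univ.filter fun j : Fin n =>
      min (l j) (l (cyc j)) ≤ i ∧ i + 1 ≤ max (l j) (l (cyc j)))) := by
    ext j
    simp only [Finset.mem_filter, Finset.mem_univ, true_and, Finset.mem_insert]
    by_cases h1 : j = k
    · subst h1
      simp only [true_or, iff_true]
      omega
    by_cases h2 : j = cycPred k
    · subst h2
      rw [hc]
      simp only [true_or, or_true, iff_true]
      omega
    have h3 : l j ≠ i + 1 := fun h => h1 (hinj _ _ (h.trans hk.symm))
    have h4 : l (cyc j) ≠ i + 1 := fun h => h2 (by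
      rw [← hinj _ _ (h.trans hk.symm), cycPred_cyc_aux])
    simp only [h1, h2, false_or]
    omega
  unfold bipSize
  rw [key, Finset.card_insert_of_notMem, Finset.card_insert_of_notMem]
  · ring
  · simp only [Finset.mem_filter, Finset.mem_univ, true_and, hc]
    omega
  · simp only [Finset.mem_filter, Finset.mem_univ, true_and, Finset.mem_insert, hpk.symm, false_or]
    omega
end

section
/- Let n ≥ 3, let l : ℤ/n → {1,…,n} be a bijection, let 1 ≤ i ≤ n−2, and let k ∈ ℤ/n be the unique index with l(k) = i+1. If the cyclic neighbors of k lie on opposite sides, i.e. either l(k−1) < l(k) < l(k+1) or l(k−1) > l(k) > l(k+1), then m_i(l) = m_{i+1}(l). -/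
/-- if the cyclic neighbors of the strand at level `i+1` lie on opposite
sides, then `m_i(l) = m_{i+1}(l)`. -/
theorem bipyramid_size_eq_of_monotone_through
    (n : ℕ) (hn : 3 ≤ n) (l : Fin n → ℕ)
    (hl : Set.BijOn l Set.univ (Set.Icc 1 n))
    (i : ℕ) (hi1 : 1 ≤ i) (hi2 : i ≤ n - 2)
    (k : Fin n) (hk : l k = i + 1)
    (hmono : (l (cycPred k) < l k ∧ l k < l (cyc k)) ∨
             (l (cyc k) < l k ∧ l k < l (cycPred k))) :
    bipSize n l i = bipSize n l (i + 1) := by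
  have hinj : ∀ a b : Fin n, l a = l b → a = b := fun a b h =>
    hl.injOn (Set.mem_univ a) (Set.mem_univ b) h
  have hcp : cyc (cycPred k) = k := by
    apply Fin.ext
    have hkn := k.isLt
    simp only [cyc, cycPred, Nat.mod_add_mod]
    rw [show k.val + (n - 1) + 1 = k.val + n by omega, Nat.add_mod_right,
      Nat.mod_eq_of_lt hkn]
  have hcinj : ∀ j : Fin n, cyc j = k → j = cycPred k := by
    intro j hj
    apply Fin.ext
    have hjn := j.isLt
    subst hj
    simp only [cyc, cycPred, Nat.mod_add_mod]
    rw [show j.val + 1 + (n - 1) = j.val + n by omega, Nat.add_mod_right,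
      Nat.mod_eq_of_lt hjn]
  have hne : cycPred k ≠ k := by
    intro h
    rw [h] at hmono
    omega
  unfold bipSize
  congr 1
  apply Finset.card_equiv (Equiv.swap k (cycPred k))
  intro j
  simp only [Finset.mem_filter, Finset.mem_univ, true_and]
  by_cases h1 : j = k
  · subst h1
    rw [Equiv.swap_apply_left, hcp]
    omega
  by_cases h2 : j = cycPred k
  · subst h2
    rw [Equiv.swap_apply_right, hcp]
    omega
  rw [Equiv.swap_apply_of_ne_of_ne h1 h2]
  have h3 : l j ≠ i + 1 := fun h => h1 (hinj _ _ (h.trans hk.symm))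
  have h4 : l (cyc j) ≠ i + 1 := fun h => h2 (hcinj _ (hinj _ _ (h.trans hk.symm)))
  omega
end

section
/- Let n ≥ 2 and let l : ℤ/n → {1,…,n} be a bijection (the level function of an n-crossing). Then the sum ∑_{i=1}^{n−1} m_i(l) of its size signature is divisible by 4. -/
theorem cyc_bij {n : ℕ} : Function.Bijective (cyc : Fin n → Fin n) := by
  apply Finite.injective_iff_bijective.mp
  intro a b h
  have h2 : (a.val + 1) % n = (b.val + 1) % n := congrArg Fin.val h
  have h3 : a.val ≡ b.val [MOD n] := Nat.ModEq.add_right_cancel' 1 h2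
  exact Fin.ext (Nat.ModEq.eq_of_lt_of_lt h3 a.isLt b.isLt)

theorem four_dvd_bipSize (n : ℕ) (l : Fin n → ℕ) (i : ℕ) : 4 ∣ bipSize n l i := by
  unfold bipSize
  suffices h : 2 ∣ (Finset.univ.filter fun j : Fin n =>
      min (l j) (l (cyc j)) ≤ i ∧ i + 1 ≤ max (l j) (l (cyc j))).card by omega
  rw [← ZMod.natCast_eq_zero_iff, Finset.card_filter]
  push_cast
  have key : ∀ j : Fin n, (if min (l j) (l (cyc j)) ≤ i ∧ i + 1 ≤ max (l j) (l (cyc j))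
      then (1 : ZMod 2) else 0)
      = (if l j ≤ i then 1 else 0) + (if l (cyc j) ≤ i then 1 else 0) := by
    intro j
    have h11 : (1 : ZMod 2) + 1 = 0 := by decide
    by_cases h1 : l j ≤ i <;> by_cases h2 : l (cyc j) ≤ i
    · rw [if_neg (by omega), if_pos h1, if_pos h2, h11]
    · rw [if_pos (by omega), if_pos h1, if_neg h2, add_zero]
    · rw [if_pos (by omega), if_neg h1, if_pos h2, zero_add]
    · rw [if_neg (by omega), if_neg h1, if_neg h2, add_zero]
  rw [Finset.sum_congr rfl (fun j _ => key j), Finset.sum_add_distrib,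
    cyc_bij.sum_comp (fun j => if l j ≤ i then (1 : ZMod 2) else 0)]
  exact CharTwo.add_self_eq_zero _

/-- the sum of the size signature of an `n`-crossing is divisible by `4`. -/
theorem four_dvd_total_bipyramid_size
    (n : ℕ) (hn : 2 ≤ n) (l : Fin n → ℕ)
    (hl : Set.BijOn l Set.univ (Set.Icc 1 n)) :
    4 ∣ ∑ i ∈ Finset.Icc 1 (n - 1), bipSize n l i := by
  exact Finset.dvd_sum fun i _ => four_dvd_bipSize n l i
end

section
/- (Lemma on extending realized sequences.) Let n ≥ 2 and suppose the sequence (m_1, m_2, …, m_{n−1}) of positive integers is realized as the size signature of some n-crossing, i.e. there is a bijection l : ℤ/n → {1,…,n} with m_i(l) = m_i for all 1 ≤ i ≤ n−1. Then the sequence (4, m_1+4, m_2+4, …, m_{n−1}+4, 4) of length n+1 is realized as the size signature of some (n+2)-crossing, i.e. there is a bijection l' : ℤ/(n+2) → {1,…,n+2} whose size signature is (4, m_1+4, …, m_{n−1}+4, 4). -/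
/-- Contribution of one edge. -/
def ecr (a b t : ℕ) : ℕ := if min a b ≤ t ∧ t + 1 ≤ max a b then 1 else 0

theorem bipSize_eq (k : ℕ) (L : ℕ → ℕ) (t : ℕ) :
    bipSize (k + 1) (fun j => L j.val) t =
      2 * (∑ i ∈ Finset.range k, ecr (L i) (L (i + 1)) t + ecr (L k) (L 0) t) := by
  unfold bipSize
  rw [Finset.card_filter]
  have h : ∀ j : Fin (k + 1), (if min (L j.val) (L (cyc j).val) ≤ t ∧
      t + 1 ≤ max (L j.val) (L (cyc j).val) then 1 else 0)
      = (fun j : ℕ => ecr (L j) (L ((j + 1) % (k + 1))) t) j.val := by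
    intro j
    rfl
  rw [Finset.sum_congr rfl (fun j _ => h j), Fin.sum_univ_eq_sum_range
    (fun j : ℕ => ecr (L j) (L ((j + 1) % (k + 1))) t), Finset.sum_range_succ, Nat.mod_self]
  congr 2
  apply Finset.sum_congr rfl
  intro i hi
  rw [Finset.mem_range] at hi
  rw [Nat.mod_eq_of_lt (by omega)]

/-- The extended level function. -/
def ext2 (n : ℕ) (L : ℕ → ℕ) (x y : ℕ) (j : ℕ) : ℕ :=
  if j < n then L j + 1 else if j = n then x else y

theorem ext2_bip (k : ℕ) (L : ℕ → ℕ) (x y t : ℕ) :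
    bipSize (k + 1 + 2) (fun j => ext2 (k + 1) L x y j.val) t =
      2 * (∑ i ∈ Finset.range k, ecr (L i + 1) (L (i + 1) + 1) t
        + ecr (L k + 1) x t + ecr x y t + ecr y (L 0 + 1) t) := by
  rw [bipSize_eq (k + 2), Finset.sum_range_succ, Finset.sum_range_succ]
  have h : ∑ i ∈ Finset.range k, ecr (ext2 (k + 1) L x y i) (ext2 (k + 1) L x y (i + 1)) t
      = ∑ i ∈ Finset.range k, ecr (L i + 1) (L (i + 1) + 1) t := by
    apply Finset.sum_congr rfl
    intro i hi
    rw [Finset.mem_range] at hi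
    simp [ext2, hi, show i < k + 1 by omega]
  rw [h]
  simp [ext2]

theorem ext2_bij (n : ℕ) (L : ℕ → ℕ) (x y : ℕ)
    (h1 : ∀ i < n, 1 ≤ L i ∧ L i ≤ n) (h2 : ∀ i < n, ∀ j < n, L i = L j → i = j)
    (h3 : ∀ v, 1 ≤ v → v ≤ n → ∃ i < n, L i = v)
    (hxy : (x = 1 ∧ y = n + 2) ∨ (x = n + 2 ∧ y = 1)) :
    Set.BijOn (fun j : Fin (n + 2) => ext2 n L x y j.val) Set.univ (Set.Icc 1 (n + 2)) := by
  refine ⟨?_, ?_, ?_⟩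
  · intro j _
    have := h1 j.val
    simp only [Set.mem_Icc, ext2]
    split_ifs <;> omega
  · intro i _ j _ hij
    have a := h1 i.val
    have b := h1 j.val
    have c := h2 i.val
    have hi := i.isLt
    have hj := j.isLt
    apply Fin.ext
    simp only [ext2] at hij
    split_ifs at hij with p q r s
    · exact c p _ q (by omega)
    all_goals omega
  · intro v hv
    rw [Set.mem_Icc] at hv
    have key : ∃ i < n + 2, ext2 n L x y i = v := by
      by_cases hx : v = x
      · exact ⟨n, by omega, by simp [ext2, hx]⟩
      by_cases hy : v = y
      · exact ⟨n + 1, by omega, by simp [ext2, hy]⟩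
      obtain ⟨i, hi, e⟩ := h3 (v - 1) (by omega) (by omega)
      exact ⟨i, by omega, by simp only [ext2, hi, if_true]; omega⟩
    obtain ⟨i, hi, e⟩ := key
    exact ⟨⟨i, hi⟩, Set.mem_univ _, e⟩

/-- Lemma on extending realized sequences: if `(m_1, …, m_{n-1})` is
realized as the size signature of some `n`-crossing, then
`(4, m_1 + 4, …, m_{n-1} + 4, 4)` is realized as the size signature of some
`(n+2)`-crossing. -/
theorem realized_extend_add_four
    (n : ℕ) (hn : 2 ≤ n) (m : ℕ → ℕ)
    (hpos : ∀ i, 1 ≤ i → i ≤ n - 1 → 0 < m i)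
    (l : Fin n → ℕ) (hl : Set.BijOn l Set.univ (Set.Icc 1 n))
    (hsig : ∀ i, 1 ≤ i → i ≤ n - 1 → bipSize n l i = m i) :
    ∃ l' : Fin (n + 2) → ℕ, Set.BijOn l' Set.univ (Set.Icc 1 (n + 2)) ∧
      bipSize (n + 2) l' 1 = 4 ∧
      bipSize (n + 2) l' (n + 1) = 4 ∧
      ∀ i, 1 ≤ i → i ≤ n - 1 → bipSize (n + 2) l' (i + 1) = m i + 4 := by
  obtain ⟨k, rfl⟩ : ∃ k, n = k + 1 := ⟨n - 1, by omega⟩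
  obtain ⟨L, rfl⟩ : ∃ L : ℕ → ℕ, l = fun j => L j.val :=
    ⟨fun i => if h : i < k + 1 then l ⟨i, h⟩ else 0, by
      funext j
      have hj := j.isLt
      simp only [hj, dif_pos, Fin.eta]⟩
  obtain ⟨hm, hi, hs⟩ := hl
  have h1 : ∀ i < k + 1, 1 ≤ L i ∧ L i ≤ k + 1 := fun i h => hm (Set.mem_univ (⟨i, h⟩ : Fin (k + 1)))
  have h2 : ∀ i < k + 1, ∀ j < k + 1, L i = L j → i = j := fun i h j h' e =>
    congrArg Fin.val (hi (Set.mem_univ (⟨i, h⟩ : Fin (k + 1))) (Set.mem_univ ⟨j, h'⟩) e)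
  have h3 : ∀ v, 1 ≤ v → v ≤ k + 1 → ∃ i < k + 1, L i = v := by
    intro v a b
    obtain ⟨j, _, e⟩ := hs ⟨a, b⟩
    exact ⟨j.val, j.isLt, e⟩
  obtain ⟨x, y, hxy⟩ : ∃ x y, (x = 1 ∧ y = k + 1 + 2 ∧ L 0 < L k) ∨
      (x = k + 1 + 2 ∧ y = 1 ∧ L k ≤ L 0) := by
    by_cases h : L 0 < L k
    · exact ⟨1, _, Or.inl ⟨rfl, rfl, h⟩⟩
    · exact ⟨_, 1, Or.inr ⟨rfl, rfl, by omega⟩⟩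
  have b0 := h1 0 (by omega)
  have bk := h1 k (by omega)
  have lo : ∑ i ∈ Finset.range k, ecr (L i + 1) (L (i + 1) + 1) 1 = 0 := by
    apply Finset.sum_eq_zero
    intro i hi
    rw [Finset.mem_range] at hi
    have := h1 i (by omega)
    have := h1 (i + 1) (by omega)
    exact if_neg (by omega)
  have up : ∑ i ∈ Finset.range k, ecr (L i + 1) (L (i + 1) + 1) (k + 1 + 1) = 0 := by
    apply Finset.sum_eq_zero
    intro i hi
    rw [Finset.mem_range] at hi
    have := h1 i (by omega)
    have := h1 (i + 1) (by omega)
    exact if_neg (by omega)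
  refine ⟨fun j => ext2 (k + 1) L x y j.val, ext2_bij _ L x y h1 h2 h3 (by omega), ?_, ?_, ?_⟩
  · rw [ext2_bip, lo]
    unfold ecr
    split_ifs <;> omega
  · rw [ext2_bip, up]
    unfold ecr
    split_ifs <;> omega
  · intro i hi1 hi2
    rw [← hsig i hi1 hi2, ext2_bip, bipSize_eq]
    have sh : ∀ a b, ecr (a + 1) (b + 1) (i + 1) = ecr a b i := by
      intro a b
      unfold ecr
      split_ifs <;> omega
    simp only [sh]
    have : ecr (L k + 1) x (i + 1) + ecr x y (i + 1) + ecr y (L 0 + 1) (i + 1)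
        = ecr (L k) (L 0) i + 2 := by
      unfold ecr
      split_ifs <;> omega
    omega
end

section
/- (Concatenation lemma.) Let u, v ≥ 2 and suppose the sequences (p_1, p_2, …, p_{u−1}) and (q_1, q_2, …, q_{v−1}) of positive integers are each realized as the size signature of a u-crossing and a v-crossing respectively, where p_1 = p_{u−1} = q_1 = q_{v−1} = 4. Then the concatenated sequence (p_1, p_2, …, p_{u−1}, q_2, …, q_{v−1}) of length u+v−3 is realized as the size signature of some (u+v−2)-crossing. -/
/-- Indicator that the level `i` separates `x` and `y`. -/
def crInd (i x y : ℕ) : ℕ := if min x y ≤ i ∧ i + 1 ≤ max x y then 1 else 0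

lemma sum_shift (n : ℕ) (g : ℕ → ℕ) (hg : ∀ j, g (j + n) = g j) (s : ℕ) :
    ∑ j ∈ Finset.range n, g (s + j) = ∑ j ∈ Finset.range n, g j := by
  induction s with
  | zero => simp
  | succ s ih =>
    rw [← ih]
    have h1 := Finset.sum_range_succ (fun j => g (s + j)) n
    have h2 := Finset.sum_range_succ' (fun j => g (s + j)) n
    rw [h1] at h2
    simp only [hg, add_zero] at h2
    have h3 : ∀ j, g (s + 1 + j) = g (s + (j + 1)) := fun j => by congr 1; omega
    simp only [h3]
    omega

lemma bip_sum (n : ℕ) (hn : 0 < n) (l : Fin n → ℕ) (H : ℕ → ℕ)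
    (hH : ∀ j, H j = l ⟨j % n, Nat.mod_lt _ hn⟩) (i : ℕ) :
    bipSize n l i = 2 * ∑ j ∈ Finset.range n, crInd i (H j) (H (j + 1)) := by
  unfold bipSize
  rw [Finset.card_filter, Finset.sum_range]
  congr 1
  refine Finset.sum_congr rfl fun j _ => ?_
  have e1 : H j.val = l j := by
    rw [hH]; congr 1; apply Fin.ext; exact Nat.mod_eq_of_lt j.isLt
  have e2 : H (j.val + 1) = l (cyc j) := by
    rw [hH]; rfl
  rw [e1, e2]; rfl

lemma norm_form (n : ℕ) (hn : 0 < n) (l : Fin n → ℕ)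
    (hl : Set.BijOn l Set.univ (Set.Icc 1 n)) (t : ℕ) (ht : 1 ≤ t) (ht' : t ≤ n) :
    ∃ F : ℕ → ℕ, F 0 = t ∧ F n = t ∧ (∀ j, 1 ≤ F j ∧ F j ≤ n) ∧
      (∀ j k, j < n → k < n → F j = F k → j = k) ∧
      ∀ i, bipSize n l i = 2 * ∑ j ∈ Finset.range n, crInd i (F j) (F (j + 1)) := by
  obtain ⟨c, -, hc⟩ := hl.surjOn (show t ∈ Set.Icc 1 n from ⟨ht, ht'⟩)
  refine ⟨fun j => l ⟨(c.val + j) % n, Nat.mod_lt _ hn⟩, ?_, ?_, ?_, ?_, ?_⟩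
  · rw [← hc]; refine congrArg l ?_; apply Fin.ext; simp [Nat.mod_eq_of_lt c.isLt]
  · rw [← hc]; refine congrArg l ?_; apply Fin.ext; simp [Nat.mod_eq_of_lt c.isLt]
  · intro j; exact hl.mapsTo (Set.mem_univ _)
  · intro j k hj hk h
    have h1 := hl.injOn (Set.mem_univ _) (Set.mem_univ _) h
    have h2 : c.val + j ≡ c.val + k [MOD n] := congrArg Fin.val h1
    exact (Nat.ModEq.add_left_cancel' _ h2).eq_of_lt_of_lt hj hk
  · intro i
    rw [bip_sum n hn l (fun j => l ⟨j % n, Nat.mod_lt _ hn⟩) (fun _ => rfl)]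
    rw [← sum_shift n _ _ c.val]
    · rfl
    · intro j
      simp [Nat.add_right_comm j n 1]

lemma concat_core (a b : ℕ) (lp : Fin (a + 2) → ℕ)
    (hlp : Set.BijOn lp Set.univ (Set.Icc 1 (a + 2)))
    (lq : Fin (b + 2) → ℕ) (hlq : Set.BijOn lq Set.univ (Set.Icc 1 (b + 2))) :
    ∃ l : Fin (a + b + 2) → ℕ, Set.BijOn l Set.univ (Set.Icc 1 (a + b + 2)) ∧
      (∀ i, i ≤ a + 1 → bipSize (a + b + 2) l i = bipSize (a + 2) lp i) ∧
      (∀ i, a + 2 ≤ i → bipSize (a + b + 2) l i = bipSize (b + 2) lq (i - a)) := by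
  obtain ⟨F, F0, Fn, Fb, Fi, Fs⟩ := norm_form (a + 2) (by omega) lp hlp (a + 2) (by omega) le_rfl
  obtain ⟨G, G0, Gn, Gb, Gi, Gs⟩ := norm_form (b + 2) (by omega) lq hlq 1 le_rfl (by omega)
  have Fb' : ∀ j, 1 ≤ j → j < a + 2 → F j ≤ a + 1 := fun j h1 h2 => by
    by_contra h
    have := Fi j 0 h2 (by omega) (by have := Fb j; omega)
    omega
  have Gb' : ∀ j, 1 ≤ j → j < b + 2 → 2 ≤ G j := fun j h1 h2 => by
    by_contra h
    have := Gi j 0 h2 (by omega) (by have := Gb j; omega)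
    omega
  set K : ℕ → ℕ := fun j => if j < a + 1 then F (j + 1) else G (j - a) + a with hK
  have K1 : ∀ j, j < a + 1 → K j = F (j + 1) := fun j hj => if_pos hj
  have K2 : ∀ j, K (a + 1 + j) = G (j + 1) + a := fun j => by
    have : ¬ (a + 1 + j < a + 1) := by omega
    simp only [hK, this, if_false]
    congr 2; omega
  have hN : 0 < a + b + 2 := by omega
  have Kb : ∀ j, j < a + b + 2 → 1 ≤ K j ∧ K j ≤ a + b + 2 := fun j hj => by
    by_cases h : j < a + 1
    · rw [K1 j h]; have := Fb (j + 1); have := Fb' (j + 1) (by omega) (by omega); omega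
    · obtain ⟨k, rfl⟩ := Nat.exists_eq_add_of_le (Nat.le_of_not_lt h)
      rw [K2]; have := Gb (k + 1); omega
  have Ki : ∀ j k, j < a + b + 2 → k < a + b + 2 → K j = K k → j = k := fun j k hj hk e => by
    rcases lt_or_ge j (a + 1) with h | h <;> rcases lt_or_ge k (a + 1) with h' | h'
    · rw [K1 j h, K1 k h'] at e
      have := Fi _ _ (by omega) (by omega) e
      omega
    · obtain ⟨k, rfl⟩ := Nat.exists_eq_add_of_le h'
      rw [K1 j h, K2] at e
      have := Fb' (j + 1) (by omega) (by omega)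
      have := Gb' (k + 1) (by omega) (by omega)
      omega
    · obtain ⟨j, rfl⟩ := Nat.exists_eq_add_of_le h
      rw [K1 k h', K2] at e
      have := Fb' (k + 1) (by omega) (by omega)
      have := Gb' (j + 1) (by omega) (by omega)
      omega
    · obtain ⟨k, rfl⟩ := Nat.exists_eq_add_of_le h'
      obtain ⟨j, rfl⟩ := Nat.exists_eq_add_of_le h
      rw [K2, K2] at e
      have := Gi (j + 1) (k + 1) (by omega) (by omega) (by omega)
      omega
  have key : ∀ i, bipSize (a + b + 2) (fun j : Fin (a + b + 2) => K j.val) i =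
      2 * (∑ j ∈ Finset.range a, crInd i (F (j + 1)) (F (j + 2)) + crInd i (F (a + 1)) (G 1 + a)
        + ∑ j ∈ Finset.range b, crInd i (G (j + 1) + a) (G (j + 2) + a)
        + crInd i (G (b + 1) + a) (F 1)) := fun i => by
    rw [bip_sum (a + b + 2) hN _ (fun j => K (j % (a + b + 2))) (fun _ => rfl)]
    rw [show Finset.range (a + b + 2) = Finset.range ((a + 1) + b + 1) by congr 1; omega]
    rw [Finset.sum_range_succ, Finset.sum_range_add, Finset.sum_range_succ]
    congr 1; congr 1; congr 1; congr 1
    · refine Finset.sum_congr rfl fun j hj => ?_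
      rw [Finset.mem_range] at hj
      rw [Nat.mod_eq_of_lt (by omega), Nat.mod_eq_of_lt (by omega), K1 _ (by omega),
        K1 _ (by omega)]
    · have := K2 0
      rw [Nat.mod_eq_of_lt (by omega), Nat.mod_eq_of_lt (by omega), K1 _ (by omega)]
      simp only [add_zero, zero_add] at this
      rw [this]
    · refine Finset.sum_congr rfl fun j hj => ?_
      rw [Finset.mem_range] at hj
      rw [Nat.mod_eq_of_lt (by omega), Nat.mod_eq_of_lt (by omega), K2, add_assoc (a + 1) j 1, K2]
    · rw [Nat.mod_eq_of_lt (by omega), show a + 1 + b + 1 = a + b + 2 by omega, Nat.mod_self,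
        K2, K1 _ (by omega)]
  refine ⟨fun j => K j.val, ?_, ?_, ?_⟩
  · have hm : ∀ j : Fin (a + b + 2), K j.val ∈ Finset.Icc 1 (a + b + 2) := fun j =>
      Finset.mem_Icc.2 (Kb j.val j.isLt)
    have hinj : Set.InjOn (fun j : Fin (a + b + 2) => K j.val) (Finset.univ : Finset (Fin (a+b+2))) :=
      fun j _ k _ e => Fin.ext (Ki _ _ j.isLt k.isLt e)
    have hs := Finset.surjOn_of_injOn_of_card_le (s := Finset.univ)
      (t := Finset.Icc 1 (a + b + 2)) (fun j : Fin (a + b + 2) => K j.val)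
      (fun j _ => hm j) hinj (by simp)
    refine ⟨fun j _ => Kb j.val j.isLt, ?_, ?_⟩
    · simpa using hinj
    · simpa using hs
  · intro i hi
    rw [key, Fs, Finset.sum_range_succ', Finset.sum_range_succ, F0]
    have e1 : ∑ j ∈ Finset.range b, crInd i (G (j + 1) + a) (G (j + 2) + a) = 0 := by
      refine Finset.sum_eq_zero fun j hj => ?_
      rw [Finset.mem_range] at hj
      have := Gb' (j + 1) (by omega) (by omega)
      have := Gb' (j + 2) (by omega) (by omega)
      unfold crInd
      rw [if_neg (by omega)]
    have g1 := Gb' 1 (by omega) (by omega)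
    have g2 := Gb' (b + 1) (by omega) (by omega)
    have e2 : crInd i (F (a + 1)) (G 1 + a) = crInd i (F (a + 1)) (a + 2) := by
      unfold crInd
      have := Fb' (a + 1) (by omega) (by omega)
      congr 1; apply propext; omega
    have e3 : crInd i (G (b + 1) + a) (F 1) = crInd i (a + 2) (F 1) := by
      unfold crInd
      have := Fb' 1 (by omega) (by omega)
      congr 1; apply propext; omega
    rw [e1, e2, e3, show a + 1 + 1 = a + 2 from rfl, Fn]
    simp only [add_assoc, zero_add, Nat.reduceAdd]
  · intro i hi
    rw [key, Gs, Finset.sum_range_succ', Finset.sum_range_succ, G0]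
    have e1 : ∑ j ∈ Finset.range a, crInd i (F (j + 1)) (F (j + 2)) = 0 := by
      refine Finset.sum_eq_zero fun j hj => ?_
      rw [Finset.mem_range] at hj
      have := Fb' (j + 1) (by omega) (by omega)
      have := Fb' (j + 2) (by omega) (by omega)
      unfold crInd
      rw [if_neg (by omega)]
    have e4 : ∀ x y, crInd i (x + a) (y + a) = crInd (i - a) x y := fun x y => by
      unfold crInd
      congr 1; apply propext; omega
    have f1 := Fb' 1 (by omega) (by omega)
    have f2 := Fb' (a + 1) (by omega) (by omega)
    have e2 : crInd i (F (a + 1)) (G 1 + a) = crInd (i - a) 1 (G 1) := by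
      unfold crInd
      congr 1; apply propext; omega
    have e3 : crInd i (G (b + 1) + a) (F 1) = crInd (i - a) (G (b + 1)) 1 := by
      unfold crInd
      congr 1; apply propext; omega
    rw [e1, e2, e3, show b + 1 + 1 = b + 2 from rfl, Gn]
    simp only [e4, zero_add, add_assoc, Nat.reduceAdd]
    ring

/-- Concatenation lemma: if `(p_1, …, p_{u-1})` and `(q_1, …, q_{v-1})`
are realized size signatures with `p_1 = p_{u-1} = q_1 = q_{v-1} = 4`, then the
concatenation `(p_1, …, p_{u-1}, q_2, …, q_{v-1})` is realized as the size signature of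
some `(u+v-2)`-crossing. -/
theorem realized_concatenate
    (u v : ℕ) (hu : 2 ≤ u) (hv : 2 ≤ v) (p q : ℕ → ℕ)
    (hppos : ∀ i, 1 ≤ i → i ≤ u - 1 → 0 < p i)
    (hqpos : ∀ i, 1 ≤ i → i ≤ v - 1 → 0 < q i)
    (hp1 : p 1 = 4) (hpend : p (u - 1) = 4)
    (hq1 : q 1 = 4) (hqend : q (v - 1) = 4)
    (lp : Fin u → ℕ) (hlp : Set.BijOn lp Set.univ (Set.Icc 1 u))
    (hsp : ∀ i, 1 ≤ i → i ≤ u - 1 → bipSize u lp i = p i)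
    (lq : Fin v → ℕ) (hlq : Set.BijOn lq Set.univ (Set.Icc 1 v))
    (hsq : ∀ i, 1 ≤ i → i ≤ v - 1 → bipSize v lq i = q i) :
    ∃ l : Fin (u + v - 2) → ℕ, Set.BijOn l Set.univ (Set.Icc 1 (u + v - 2)) ∧
      (∀ i, 1 ≤ i → i ≤ u - 1 → bipSize (u + v - 2) l i = p i) ∧
      (∀ i, u ≤ i → i ≤ u + v - 3 → bipSize (u + v - 2) l i = q (i - u + 2)) := by
  obtain ⟨a, rfl⟩ := Nat.exists_eq_add_of_le' hu
  obtain ⟨b, rfl⟩ := Nat.exists_eq_add_of_le' hv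
  obtain ⟨l, h1, h2, h3⟩ := concat_core a b lp hlp lq hlq
  rw [show a + 2 + (b + 2) - 2 = a + b + 2 by omega]
  refine ⟨l, h1, ?_, ?_⟩
  · intro i hi hi'
    rw [h2 i (by omega), hsp i hi hi']
  · intro i hi hi'
    rw [h3 i hi, hsq _ (by omega) (by omega)]
    congr 1; omega
end

section
/- (Realization theorem for bipyramid size signatures.) Let n ≥ 2 and let (m_1, m_2, …, m_{n−1}) be any sequence of positive integers such that m_1 = m_{n−1} = 4 and |m_i − m_{i+1}| = 0 or 4 for every 1 ≤ i ≤ n−2. Then this sequence is realized as the size signature of some n-crossing: there exists a bijection l : ℤ/n → {1,…,n} with m_i(l) = m_i for all 1 ≤ i ≤ n−1. -/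
theorem nth_facts (p : ℕ → Prop) [DecidablePred p] (N a : ℕ) (h : a < Nat.count p N) :
    p (Nat.nth p a) ∧ Nat.count p (Nat.nth p a) = a ∧ Nat.nth p a < N := by
  have h' : ∀ hf : (Set.ofPred p).Finite, a < hf.toFinset.card :=
    fun hf => h.trans_le (Nat.count_le_card hf N)
  exact ⟨Nat.nth_mem a h', Nat.count_nth h', Nat.nth_lt_of_lt_count h⟩

theorem nth_lt_nth_of (p : ℕ → Prop) [DecidablePred p] (N a b : ℕ) (h : b < Nat.count p N)
    (hab : a < b) : Nat.nth p a < Nat.nth p b := by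
  have h' : ∀ hf : (Set.ofPred p).Finite, b < hf.toFinset.card :=
    fun hf => h.trans_le (Nat.count_le_card hf N)
  exact Nat.nth_lt_nth' hab h'

theorem exists_layout (n : ℕ) (hn : 2 ≤ n) (K : ℕ → ℤ) (h0 : K 0 = 0) (hKn : K n = 0)
    (hpos : ∀ i, 1 ≤ i → i < n → 0 < K i) (h1 : K 1 = 4) (hend : K (n - 1) = 4)
    (hstep : ∀ v, 1 ≤ v → v ≤ n →
      K v - K (v - 1) = 4 ∨ K v - K (v - 1) = -4 ∨ K v - K (v - 1) = 0) :
    ∃ (h : ℕ) (L : ℕ → ℕ), 2 * h ≤ n ∧ 1 ≤ h ∧ (∀ j, j < n → 1 ≤ L j ∧ L j ≤ n) ∧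
      (∀ i j, i < n → j < n → L i = L j → i = j) ∧
      (∀ j, j < 2 * h → j % 2 = 0 → K (L j) - K (L j - 1) = 4) ∧
      (∀ j, j < 2 * h → j % 2 = 1 → K (L j) - K (L j - 1) = -4) ∧
      (∀ j, j < n → 2 * h ≤ j → K (L j) - K (L j - 1) = 0) ∧
      (∀ j, j < 2 * h → j % 2 = 0 → L j < L (j + 1)) ∧
      (∀ j, j + 1 < n → (j % 2 = 1 ∨ 2 * h ≤ j) → L (j + 1) < L j) ∧
      L 0 < L (n - 1) := by
  classical
  obtain ⟨P, hP⟩ : ∃ P : ℕ → Prop, ∀ v, P v ↔ (1 ≤ v ∧ v ≤ n ∧ K v - K (v - 1) = 4) :=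
    ⟨_, fun _ => Iff.rfl⟩
  obtain ⟨D, hD⟩ : ∃ P : ℕ → Prop, ∀ v, P v ↔ (1 ≤ v ∧ v ≤ n ∧ K v - K (v - 1) = -4) :=
    ⟨_, fun _ => Iff.rfl⟩
  obtain ⟨Z, hZ⟩ : ∃ P : ℕ → Prop, ∀ v, P v ↔ (1 ≤ v ∧ v ≤ n ∧ K v - K (v - 1) = 0) :=
    ⟨_, fun _ => Iff.rfl⟩
  have hcount : ∀ i, i ≤ n →
      K i = 4 * ((Nat.count P (i + 1) : ℤ) - Nat.count D (i + 1)) ∧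
      Nat.count P (i + 1) + Nat.count D (i + 1) + Nat.count Z (i + 1) = i := by
    intro i
    induction i with
    | zero =>
      intro _
      simp [Nat.count_succ, hP, hD, hZ, h0]
    | succ i ih =>
      intro hi
      obtain ⟨a, b⟩ := ih (by omega)
      have hs := hstep (i + 1) (by omega) hi
      rw [Nat.count_succ P (i + 1), Nat.count_succ D (i + 1), Nat.count_succ Z (i + 1)]
      simp only [hP, hD, hZ]
      simp only [Nat.add_sub_cancel] at hs ⊢
      have e1 : 1 ≤ i + 1 := by omega
      rcases hs with hs | hs | hs <;> simp [hs, hi] <;> constructor <;> omega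
  obtain ⟨hc1, hc2⟩ := hcount n le_rfl
  have hPn := hP n
  have P1 : P 1 := (hP 1).2 ⟨le_rfl, by omega, by simp [h0, h1]⟩
  have Dn : D n := (hD n).2 ⟨by omega, le_rfl, by rw [hKn, hend]; norm_num⟩
  have hP0 : ¬ P 0 := by simp [hP]
  have u0 : Nat.nth P 0 = 1 := by
    have := Nat.nth_count P1
    rwa [Nat.count_succ, Nat.count_zero, if_neg hP0] at this
  have cD : Nat.count D (n + 1) = Nat.count D n + 1 := by rw [Nat.count_succ, if_pos Dn]
  have dlast : Nat.nth D (Nat.count D n) = n := Nat.nth_count Dn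
  obtain ⟨h, hh⟩ : ∃ h, h = Nat.count P (n + 1) := ⟨_, rfl⟩
  have hhD : Nat.count D (n + 1) = h := by rw [hKn] at hc1; omega
  obtain ⟨c, hc⟩ : ∃ c, c = Nat.count Z (n + 1) := ⟨_, rfl⟩
  have hn2 : 2 * h + c = n := by omega
  have fP := fun a (ha : a < h) => nth_facts P (n + 1) a (by omega)
  have fD := fun a (ha : a < h) => nth_facts D (n + 1) a (by omega)
  have fZ := fun a (ha : a < c) => nth_facts Z (n + 1) a (by omega)
  have mP := fun a b (hb : b < h) => nth_lt_nth_of P (n + 1) a b (by omega)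
  have mZ := fun a b (hb : b < c) => nth_lt_nth_of Z (n + 1) a b (by omega)
  have dl : Nat.nth D (h - 1) = n := by
    have : h - 1 = Nat.count D n := by omega
    rw [this, dlast]
  -- ballot property
  have bal : ∀ a, a + 1 < h → Nat.nth P (a + 1) < Nat.nth D a := by
    intro a ha
    obtain ⟨q1, q2, q3⟩ := fD a (by omega)
    have hq := (hD _).1 q1
    have hne : Nat.nth D a ≠ n := by
      intro e
      rw [e] at q2
      omega
    have := hpos _ hq.1 (by omega)
    have h4 := (hcount _ hq.2.1).1
    have h5 : Nat.count D (Nat.nth D a + 1) = a + 1 := by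
      rw [Nat.count_succ, if_pos q1, q2]
    have h6 : Nat.nth P (a + 1) < Nat.nth D a + 1 := Nat.nth_lt_of_lt_count (by omega)
    have h7 : Nat.nth P (a + 1) ≠ Nat.nth D a := by
      intro e
      have := (hP _).1 (fP (a + 1) ha).1
      rw [e] at this
      omega
    omega
  have bal2 : ∀ a, a < h → Nat.nth P a < Nat.nth D a := by
    intro a ha
    by_cases hl : a + 1 < h
    · exact (mP a (a + 1) hl (by omega)).trans (bal a hl)
    · have : a = h - 1 := by omega
      have hp := (hP _).1 (fP a ha).1
      have hd := (hD _).1 (fD a ha).1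
      have hx : Nat.nth D a = n := by rw [this, dl]
      have : Nat.nth P a ≠ Nat.nth D a := by
        intro e
        rw [e] at hp
        omega
      omega
  have gP := fun a (ha : a < h) => (hP _).1 (fP a ha).1
  have gD := fun a (ha : a < h) => (hD _).1 (fD a ha).1
  have gZ := fun a (ha : a < c) => (hZ _).1 (fZ a ha).1
  have h1h : 1 ≤ h := by omega
  obtain ⟨L, hL⟩ : ∃ L : ℕ → ℕ, ∀ j, L j = if j < 2 * h then
      (if j % 2 = 0 then Nat.nth P (j / 2) else Nat.nth D (j / 2)) else Nat.nth Z (n - 1 - j) :=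
    ⟨_, fun _ => rfl⟩
  have L1 : ∀ j, j < 2 * h → j % 2 = 0 → L j = Nat.nth P (j / 2) := by
    intro j a b; rw [hL, if_pos a, if_pos b]
  have L2 : ∀ j, j < 2 * h → j % 2 = 1 → L j = Nat.nth D (j / 2) := by
    intro j a b; rw [hL, if_pos a, if_neg (by omega)]
  have L3 : ∀ j, 2 * h ≤ j → L j = Nat.nth Z (n - 1 - j) := by
    intro j a; rw [hL, if_neg (by omega)]
  have tri : ∀ j, j < n → (j < 2 * h ∧ j % 2 = 0) ∨ (j < 2 * h ∧ j % 2 = 1) ∨ 2 * h ≤ j := by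
    intro j _; omega
  have E1 : ∀ j, j < 2 * h → j % 2 = 0 → K (L j) - K (L j - 1) = 4 := by
    intro j a b; rw [L1 j a b]; exact (gP _ (by omega)).2.2
  have E2 : ∀ j, j < 2 * h → j % 2 = 1 → K (L j) - K (L j - 1) = -4 := by
    intro j a b; rw [L2 j a b]; exact (gD _ (by omega)).2.2
  have E3 : ∀ j, j < n → 2 * h ≤ j → K (L j) - K (L j - 1) = 0 := by
    intro j a b; rw [L3 j b]; exact (gZ _ (by omega)).2.2
  have R : ∀ j, j < n → 1 ≤ L j ∧ L j ≤ n := by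
    intro j hj
    rcases tri j hj with ⟨a, b⟩ | ⟨a, b⟩ | a
    · rw [L1 j a b]; have := gP (j / 2) (by omega); exact ⟨this.1, this.2.1⟩
    · rw [L2 j a b]; have := gD (j / 2) (by omega); exact ⟨this.1, this.2.1⟩
    · rw [L3 j a]; have := gZ (n - 1 - j) (by omega); exact ⟨this.1, this.2.1⟩
  have L0 : L 0 = 1 := by rw [L1 0 (by omega) (by omega)]; exact u0
  have INJ : ∀ i j, i < n → j < n → L i = L j → i = j := by
    intro i j hi hj e
    have ee : K (L i) - K (L i - 1) = K (L j) - K (L j - 1) := by rw [e]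
    rcases tri i hi with ⟨a, b⟩ | ⟨a, b⟩ | a <;> rcases tri j hj with ⟨a', b'⟩ | ⟨a', b'⟩ | a'
    · rw [L1 i a b, L1 j a' b'] at e
      have x := (fP (i / 2) (by omega)).2.1
      have y := (fP (j / 2) (by omega)).2.1
      rw [e] at x; omega
    · rw [E1 i a b, E2 j a' b'] at ee; omega
    · rw [E1 i a b, E3 j hj a'] at ee; omega
    · rw [E2 i a b, E1 j a' b'] at ee; omega
    · rw [L2 i a b, L2 j a' b'] at e
      have x := (fD (i / 2) (by omega)).2.1
      have y := (fD (j / 2) (by omega)).2.1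
      rw [e] at x; omega
    · rw [E2 i a b, E3 j hj a'] at ee; omega
    · rw [E3 i hi a, E1 j a' b'] at ee; omega
    · rw [E3 i hi a, E2 j a' b'] at ee; omega
    · rw [L3 i a, L3 j a'] at e
      have x := (fZ (n - 1 - i) (by omega)).2.1
      have y := (fZ (n - 1 - j) (by omega)).2.1
      rw [e] at x; omega
  refine ⟨h, L, by omega, h1h, R, INJ, E1, E2, E3, ?_, ?_, ?_⟩
  · intro j a b
    rw [L1 j a b, L2 (j + 1) (by omega) (by omega)]
    have : (j + 1) / 2 = j / 2 := by omega
    rw [this]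
    exact bal2 _ (by omega)
  · intro j a b
    by_cases hj : 2 * h ≤ j
    · rw [L3 j hj, L3 (j + 1) (by omega)]
      exact mZ _ _ (by omega) (by omega)
    · have b' : j % 2 = 1 := by omega
      by_cases hj2 : j + 1 < 2 * h
      · rw [L2 j (by omega) b', L1 (j + 1) (by omega) (by omega)]
        have : (j + 1) / 2 = j / 2 + 1 := by omega
        rw [this]
        exact bal _ (by omega)
      · have e : L j = n := by
          rw [L2 j (by omega) b']
          have : j / 2 = h - 1 := by omega
          rw [this, dl]
        have := R (j + 1) a
        have : L (j + 1) ≠ L j := fun e => by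
          have := INJ _ _ a (by omega) e
          omega
        omega
  · have := R (n - 1) (by omega)
    have : L 0 ≠ L (n - 1) := fun e => by
      have := INJ _ _ (by omega) (by omega) e
      omega
    omega

theorem cyc_bijective (n : ℕ) : Function.Bijective (cyc : Fin n → Fin n) := by
  rw [← Finite.injective_iff_bijective]
  intro a b e
  have h : (a.val + 1) % n = (b.val + 1) % n := congrArg Fin.val e
  have ha := a.isLt
  have hb := b.isLt
  apply Fin.ext
  rcases Nat.lt_or_ge (a.val + 1) n with h1 | h1 <;> rcases Nat.lt_or_ge (b.val + 1) n with h2 | h2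
  · rw [Nat.mod_eq_of_lt h1, Nat.mod_eq_of_lt h2] at h; omega
  · have : b.val + 1 = n := by omega
    rw [Nat.mod_eq_of_lt h1, this, Nat.mod_self] at h; omega
  · have : a.val + 1 = n := by omega
    rw [Nat.mod_eq_of_lt h2, this, Nat.mod_self] at h; omega
  · omega

theorem sum_step (K : ℕ → ℤ) (h0 : K 0 = 0) (i : ℕ) :
    ∑ v ∈ Finset.Icc 1 i, (K v - K (v - 1)) = K i := by
  induction i with
  | zero => simp [h0]
  | succ i ih => rw [Finset.sum_Icc_succ_top (by omega), ih]; simp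

/-- Realization theorem: every sequence `(m_1, …, m_{n-1})` of positive
integers with `m_1 = m_{n-1} = 4` and adjacent differences `0` or `4` is realized as the
size signature of some `n`-crossing. -/
theorem realization_of_signature
    (n : ℕ) (hn : 2 ≤ n) (m : ℕ → ℕ)
    (hpos : ∀ i, 1 ≤ i → i ≤ n - 1 → 0 < m i)
    (h1 : m 1 = 4) (hend : m (n - 1) = 4)
    (hdiff : ∀ i, 1 ≤ i → i ≤ n - 2 →
      |(m i : ℤ) - (m (i + 1) : ℤ)| = 0 ∨ |(m i : ℤ) - (m (i + 1) : ℤ)| = 4) :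
    ∃ l : Fin n → ℕ, Set.BijOn l Set.univ (Set.Icc 1 n) ∧
      ∀ i, 1 ≤ i → i ≤ n - 1 → bipSize n l i = m i := by
  obtain ⟨K, hK⟩ : ∃ K : ℕ → ℤ, ∀ i, K i = if 1 ≤ i ∧ i ≤ n - 1 then (m i : ℤ) else 0 :=
    ⟨_, fun _ => rfl⟩
  have K0 : K 0 = 0 := by simp [hK]
  have Kn : K n = 0 := by rw [hK, if_neg (by omega)]
  have Ki : ∀ i, 1 ≤ i → i ≤ n - 1 → K i = m i := fun i a b => by rw [hK, if_pos ⟨a, b⟩]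
  have K1 : K 1 = 4 := by rw [Ki 1 le_rfl (by omega), h1]; rfl
  have Ke : K (n - 1) = 4 := by rw [Ki _ (by omega) le_rfl, hend]; rfl
  obtain ⟨h, L, hh, h1h, R, INJ, E1, E2, E3, U1, U2, U3⟩ := exists_layout n hn K K0 Kn
    (fun i a b => by rw [Ki i a (by omega)]; exact_mod_cast hpos i a (by omega)) K1 Ke
    (by
      intro v a b
      rcases Nat.lt_or_ge v 2 with c | c
      · have : v = 1 := by omega
        subst this
        left; simp [K0, K1]
      · rcases Nat.lt_or_ge v n with d | d
        · rw [Ki v a (by omega), Ki (v - 1) (by omega) (by omega)]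
          have := hdiff (v - 1) (by omega) (by omega)
          rw [Nat.sub_add_cancel a] at this
          rcases this with this | this
          · rw [abs_eq_zero] at this; omega
          · rw [abs_eq (by norm_num)] at this; omega
        · have : v = n := by omega
          subst this
          right; left; rw [Kn, Ke]; norm_num)
  have linj : Function.Injective (fun j : Fin n => L j.val) := fun a b e =>
    Fin.ext (INJ _ _ a.isLt b.isLt e)
  have himg : Finset.univ.image (fun j : Fin n => L j.val) = Finset.Icc 1 n := by
    apply Finset.eq_of_subset_of_card_le
    · intro v hv
      obtain ⟨j, -, rfl⟩ := Finset.mem_image.1 hv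
      exact Finset.mem_Icc.2 (R _ j.isLt)
    · rw [Finset.card_image_of_injective _ linj]; simp
  refine ⟨fun j => L j.val, ⟨fun j _ => R _ j.isLt, linj.injOn, ?_⟩, ?_⟩
  · intro v hv
    have : v ∈ Finset.univ.image (fun j : Fin n => L j.val) := by
      rw [himg]; exact Finset.mem_Icc.2 hv
    obtain ⟨j, -, e⟩ := Finset.mem_image.1 this
    exact ⟨j, Set.mem_univ _, e⟩
  · intro i hi1 hi2
    obtain ⟨s, hs⟩ : ∃ s : ℕ → ℤ, ∀ j, s j = if j < 2 * h ∧ j % 2 = 0 then 1 else -1 :=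
      ⟨_, fun _ => rfl⟩
    obtain ⟨r, hr⟩ : ∃ r : ℕ → ℤ, ∀ j, r j = if j < 2 * h ∧ j % 2 = 1 then 1 else -1 :=
      ⟨_, fun _ => rfl⟩
    obtain ⟨w, hw⟩ : ∃ w : ℕ → ℤ, ∀ j, w j = if L j ≤ i then 1 else 0 := ⟨_, fun _ => rfl⟩
    have hrs : ∀ j : Fin n, r (cyc j).val = s j.val := by
      intro j
      have hj := j.isLt
      change r ((j.val + 1) % n) = s j.val
      rcases Nat.lt_or_ge (j.val + 1) n with a | a
      · rw [Nat.mod_eq_of_lt a, hr, hs]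
        congr 1
        apply propext
        omega
      · have : j.val + 1 = n := by omega
        rw [this, Nat.mod_self, hr, hs, if_neg (by omega), if_neg (by omega)]
    have hcr : ∀ j : Fin n, (if min (L j.val) (L (cyc j).val) ≤ i ∧
        i + 1 ≤ max (L j.val) (L (cyc j).val) then (1 : ℤ) else 0)
        = s j.val * w j.val - r (cyc j).val * w (cyc j).val := by
      intro j
      rw [hrs]
      have hj := j.isLt
      have hlt : (s j.val = 1 ∧ L j.val < L (cyc j).val) ∨
          (s j.val = -1 ∧ L (cyc j).val < L j.val) := by
        change (s j.val = 1 ∧ L j.val < L ((j.val + 1) % n)) ∨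
          (s j.val = -1 ∧ L ((j.val + 1) % n) < L j.val)
        rcases Nat.lt_or_ge (j.val + 1) n with a | a
        · rw [Nat.mod_eq_of_lt a, hs]
          by_cases c : j.val < 2 * h ∧ j.val % 2 = 0
          · left; exact ⟨if_pos c, U1 _ c.1 c.2⟩
          · right; exact ⟨if_neg c, U2 _ a (by omega)⟩
        · have e : j.val + 1 = n := by omega
          have e' : j.val = n - 1 := by omega
          right
          rw [e, Nat.mod_self, hs, if_neg (by omega), e']
          exact ⟨rfl, U3⟩
      rw [hw, hw]
      rcases hlt with ⟨a, b⟩ | ⟨a, b⟩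
      · rw [a, min_eq_left b.le, max_eq_right b.le]
        split_ifs <;> omega
      · rw [a, min_eq_right b.le, max_eq_left b.le]
        split_ifs <;> omega
    have hE : ∀ j : Fin n, 2 * (s j.val * w j.val - r j.val * w j.val)
        = (fun v => if v ≤ i then K v - K (v - 1) else 0) (L j.val) := by
      intro j
      have hj := j.isLt
      simp only [hw]
      split_ifs with c
      · by_cases a : j.val < 2 * h
        · rcases Nat.mod_two_eq_zero_or_one j.val with b | b
          · rw [E1 _ a b, hs, hr, if_pos ⟨a, b⟩, if_neg (by omega)]; norm_num
          · rw [E2 _ a b, hs, hr, if_neg (by omega), if_pos ⟨a, b⟩]; norm_num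
        · rw [E3 _ hj (by omega), hs, hr, if_neg (by omega), if_neg (by omega)]; norm_num
      · ring
    have key : ((bipSize n (fun j => L j.val) i : ℕ) : ℤ) = m i := by
      unfold bipSize
      rw [Nat.cast_mul, Finset.card_filter]
      push_cast
      rw [Finset.sum_congr rfl (fun j _ => hcr j), Finset.sum_sub_distrib,
        (cyc_bijective n).sum_comp (fun j : Fin n => r j.val * w j.val),
        ← Finset.sum_sub_distrib, Finset.mul_sum, Finset.sum_congr rfl (fun j _ => hE j),
        ← Finset.sum_image (f := fun v => if v ≤ i then K v - K (v - 1) else 0)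
          (g := fun j : Fin n => L j.val) linj.injOn, himg, ← Finset.sum_filter]
      have : (Finset.Icc 1 n).filter (fun v => v ≤ i) = Finset.Icc 1 i := by
        ext v
        simp only [Finset.mem_filter, Finset.mem_Icc]
        omega
      rw [this, sum_step K K0, Ki i hi1 hi2]
    exact_mod_cast key
end

section
/- (Characterization of realizable size signatures.) Let n ≥ 2. A sequence (m_1, m_2, …, m_{n−1}) of positive integers is realized as the size signature of some n-crossing (i.e. there exists a bijection l : ℤ/n → {1,…,n} with m_i(l) = m_i for all 1 ≤ i ≤ n−1) if and only if m_1 = m_{n−1} = 4 and |m_i − m_{i+1}| = 0 or 4 for every 1 ≤ i ≤ n−2. -/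
def upC (n : ℕ) (l : Fin n → ℕ) (i : ℕ) : ℕ :=
  (Finset.univ.filter fun j : Fin n => l j ≤ i ∧ i < l (cyc j)).card

def kV (n : ℕ) (l : Fin n → ℕ) (i : ℕ) : ℕ :=
  (Finset.univ.filter fun j : Fin n => l j = i + 1 ∧ i + 1 < l (cyc j)).card

def kP (n : ℕ) (l : Fin n → ℕ) (i : ℕ) : ℕ :=
  (Finset.univ.filter fun j : Fin n => l (cyc j) = i + 1 ∧ l j < i + 1).card

theorem cyc_inj {n : ℕ} : Function.Injective (cyc : Fin n → Fin n) := by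
  intro a b h
  have h' : (a.val + 1) % n = (b.val + 1) % n := congrArg Fin.val h
  have ha := a.isLt
  have hb := b.isLt
  ext
  rcases Nat.lt_or_ge (a.val + 1) n with h1 | h1 <;>
    rcases Nat.lt_or_ge (b.val + 1) n with h2 | h2
  · rw [Nat.mod_eq_of_lt h1, Nat.mod_eq_of_lt h2] at h'; omega
  · have : b.val + 1 = n := by omega
    rw [Nat.mod_eq_of_lt h1, this, Nat.mod_self] at h'; omega
  · have : a.val + 1 = n := by omega
    rw [Nat.mod_eq_of_lt h2, this, Nat.mod_self] at h'; omega
  · omega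

theorem bip_eq (n : ℕ) (l : Fin n → ℕ) (i : ℕ) : bipSize n l i = 4 * upC n l i := by
  have hs : ∑ j : Fin n, (if l (cyc j) ≤ i then 1 else 0) = ∑ j : Fin n, (if l j ≤ i then 1 else 0) :=
    Function.Bijective.sum_comp cyc_bij (fun j => if l j ≤ i then 1 else 0)
  have h2 : ∑ j : Fin n, ((if min (l j) (l (cyc j)) ≤ i ∧ i + 1 ≤ max (l j) (l (cyc j)) then 1 else 0)
        + (if l j ≤ i then 1 else 0)) =
      ∑ j : Fin n, (2 * (if l j ≤ i ∧ i < l (cyc j) then 1 else 0) + (if l (cyc j) ≤ i then 1 else 0)) := by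
    apply Finset.sum_congr rfl
    intro j _
    split_ifs <;> omega
  rw [Finset.sum_add_distrib, Finset.sum_add_distrib, ← Finset.mul_sum, hs] at h2
  unfold bipSize upC
  rw [Finset.card_filter, Finset.card_filter]
  omega

theorem up_step (n : ℕ) (l : Fin n → ℕ) (i : ℕ) :
    upC n l (i + 1) + kP n l i = upC n l i + kV n l i := by
  unfold upC kP kV
  simp only [Finset.card_filter]
  rw [← Finset.sum_add_distrib, ← Finset.sum_add_distrib]
  apply Finset.sum_congr rfl
  intro j _
  split_ifs <;> omega

theorem kV_le (n : ℕ) (l : Fin n → ℕ) (hl : Function.Injective l) (i : ℕ) : kV n l i ≤ 1 := by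
  unfold kV
  rw [Finset.card_le_one]
  intro a ha b hb
  simp only [Finset.mem_filter] at ha hb
  exact hl (by omega)

theorem kP_le (n : ℕ) (l : Fin n → ℕ) (hl : Function.Injective l) (i : ℕ) : kP n l i ≤ 1 := by
  unfold kP
  rw [Finset.card_le_one]
  intro a ha b hb
  simp only [Finset.mem_filter] at ha hb
  exact cyc_inj (hl (by omega))

theorem forward_dir
    (n : ℕ) (hn : 2 ≤ n) (m : ℕ → ℕ)
    (hpos : ∀ i, 1 ≤ i → i ≤ n - 1 → 0 < m i)
    (l : Fin n → ℕ) (hb : Set.BijOn l Set.univ (Set.Icc 1 n))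
    (hm : ∀ i, 1 ≤ i → i ≤ n - 1 → bipSize n l i = m i) :
      (m 1 = 4 ∧ m (n - 1) = 4 ∧
        ∀ i, 1 ≤ i → i ≤ n - 2 →
          |(m i : ℤ) - (m (i + 1) : ℤ)| = 0 ∨ |(m i : ℤ) - (m (i + 1) : ℤ)| = 4) := by
  have hl : Function.Injective l := Set.injOn_univ.mp hb.injOn
  have hr : ∀ j, 1 ≤ l j ∧ l j ≤ n := fun j => hb.mapsTo (Set.mem_univ j)
  refine ⟨?_, ?_, ?_⟩
  · have h0 : upC n l 0 = 0 := by
      unfold upC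
      rw [Finset.card_eq_zero, Finset.filter_eq_empty_iff]
      intro j _ h
      have := hr j
      omega
    have h1 := up_step n l 0
    have h2 := kV_le n l hl 0
    have h3 := hm 1 (by omega) (by omega)
    have h4 := hpos 1 (by omega) (by omega)
    rw [bip_eq] at h3
    simp only [zero_add] at h1
    omega
  · have h0 : upC n l n = 0 := by
      unfold upC
      rw [Finset.card_eq_zero, Finset.filter_eq_empty_iff]
      intro j _ h
      have := hr (cyc j)
      omega
    have h1 := up_step n l (n - 1)
    have h2 := kP_le n l hl (n - 1)
    have h3 := hm (n - 1) (by omega) (by omega)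
    have h4 := hpos (n - 1) (by omega) (by omega)
    rw [bip_eq] at h3
    rw [show n - 1 + 1 = n by omega] at h1
    omega
  · intro i hi1 hi2
    have h1 := up_step n l i
    have h2 := kP_le n l hl i
    have h2' := kV_le n l hl i
    have h3 := hm i (by omega) (by omega)
    have h4 := hm (i + 1) (by omega) (by omega)
    rw [bip_eq] at h3 h4
    rcases abs_cases ((m i : ℤ) - (m (i + 1) : ℤ)) with hq | hq <;>
    omega

section back

def isV (c : ℕ → ℕ) (y : ℕ) : Prop := c y = c (y - 1) + 1
def isP (c : ℕ → ℕ) (y : ℕ) : Prop := c (y - 1) = c y + 1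
def isF (c : ℕ → ℕ) (y : ℕ) : Prop := 1 ≤ y ∧ c y = c (y - 1)

instance (c : ℕ → ℕ) : DecidablePred (isV c) := fun y => by unfold isV; infer_instance
instance (c : ℕ → ℕ) : DecidablePred (isP c) := fun y => by unfold isP; infer_instance
instance (c : ℕ → ℕ) : DecidablePred (isF c) := fun y => by unfold isF; infer_instance

def posn (n : ℕ) (c : ℕ → ℕ) (x : ℕ) : ℕ :=
  if isV c x then 2 * Nat.count (isV c) x
  else if isP c x then 2 * Nat.count (isP c) x + 1
  else n - 1 - Nat.count (isF c) x

theorem count_inv (n : ℕ) (c : ℕ → ℕ) (c0 : c 0 = 0)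
    (hs : ∀ i, i < n → c (i + 1) = c i ∨ c (i + 1) = c i + 1 ∨ c i = c (i + 1) + 1) :
    ∀ x, x ≤ n → Nat.count (isV c) (x + 1) = Nat.count (isP c) (x + 1) + c x ∧
      Nat.count (isV c) (x + 1) + Nat.count (isP c) (x + 1) + Nat.count (isF c) (x + 1) = x := by
  intro x
  induction x with
  | zero => intro _; simp [Nat.count_succ, isV, isP, isF, c0]
  | succ x ih =>
    intro hx
    have ih := ih (by omega)
    have := hs x (by omega)
    rw [Nat.count_succ _ (x + 1), Nat.count_succ _ (x + 1), Nat.count_succ _ (x + 1)]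
    simp only [isV, isP, isF, Nat.add_sub_cancel] at ih ⊢
    split_ifs <;> omega

theorem posn_facts (n : ℕ) (hn : 2 ≤ n) (c : ℕ → ℕ) (c0 : c 0 = 0) (cn : c n = 0)
    (hc : ∀ i, 1 ≤ i → i < n → 1 ≤ c i)
    (hs : ∀ i, i < n → c (i + 1) = c i ∨ c (i + 1) = c i + 1 ∨ c i = c (i + 1) + 1) :
    ∃ k, 1 ≤ k ∧ 2 * k ≤ n ∧ ∀ x, 1 ≤ x → x ≤ n →
      (isV c x ∧ ¬ isP c x ∧ posn n c x = 2 * Nat.count (isV c) x ∧ Nat.count (isV c) x < k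
        ∧ (Nat.count (isV c) x = 0 → x = 1)) ∨
      (¬ isV c x ∧ isP c x ∧ posn n c x = 2 * Nat.count (isP c) x + 1 ∧ Nat.count (isP c) x < k
        ∧ (Nat.count (isP c) x + 1 = k → x = n)) ∨
      (¬ isV c x ∧ ¬ isP c x ∧ isF c x ∧ posn n c x + 1 + Nat.count (isF c) x = n ∧ 2 * k ≤ posn n c x
        ∧ 1 < x ∧ x < n) := by
  have hI := count_inv n c c0 hs
  obtain ⟨hk, hk2⟩ := hI n le_rfl
  have v1 : isV c 1 := by
    have h := hs 0 (by omega); have := hc 1 le_rfl (by omega)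
    rw [zero_add] at h
    unfold isV; rw [Nat.sub_self]; omega
  have pn : isP c n := by
    have := hc (n - 1) (by omega) (by omega)
    have h := hs (n - 1) (by omega)
    rw [show n - 1 + 1 = n by omega] at h
    unfold isP; omega
  have nv : ∀ x, isV c x → isP c x → False := by
    intro x h1 h2; unfold isV at h1; unfold isP at h2; omega
  have hV1 : Nat.count (isV c) 2 ≤ Nat.count (isV c) (n + 1) := Nat.count_monotone _ (by omega)
  have hV1' : 1 ≤ Nat.count (isV c) 2 := by
    rw [Nat.count_succ, if_pos v1]; omega
  refine ⟨Nat.count (isV c) (n + 1), by omega, by omega, ?_⟩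
  intro x hx1 hx2
  by_cases hv : isV c x
  · left
    have hp : ¬ isP c x := fun h => nv x hv h
    refine ⟨hv, hp, by simp [posn, hv], ?_, ?_⟩
    · exact Nat.count_strict_mono hv (by omega)
    · intro h0
      by_contra hne
      have : Nat.count (isV c) 2 ≤ Nat.count (isV c) x := Nat.count_monotone _ (by omega)
      omega
  · by_cases hp : isP c x
    · right; left
      refine ⟨hv, hp, by simp [posn, hv, hp], ?_, ?_⟩
      · have : Nat.count (isP c) x < Nat.count (isP c) (n + 1) := Nat.count_strict_mono hp (by omega)
        omega
      · intro h0
        by_contra hne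
        have h1 : Nat.count (isP c) x < Nat.count (isP c) n := Nat.count_strict_mono hp (by omega)
        have h2 : Nat.count (isP c) n < Nat.count (isP c) (n + 1) := Nat.count_strict_mono pn (by omega)
        omega
    · right; right
      have hf : isF c x := by
        refine ⟨hx1, ?_⟩
        have h := hs (x - 1) (by omega)
        rw [show x - 1 + 1 = x by omega] at h
        unfold isV at hv; unfold isP at hp; omega
      have h1 : Nat.count (isF c) x < Nat.count (isF c) (n + 1) := Nat.count_strict_mono hf (by omega)
      have h2 : posn n c x = n - 1 - Nat.count (isF c) x := by simp [posn, hv, hp]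
      have h3 : x ≠ 1 := by rintro rfl; exact hv v1
      have h4 : x ≠ n := by rintro rfl; exact hp pn
      refine ⟨hv, hp, hf, ?_, ?_, ?_, ?_⟩ <;> omega

theorem edge_cmp (n : ℕ) (hn : 2 ≤ n) (c : ℕ → ℕ) (c0 : c 0 = 0) (cn : c n = 0)
    (hc : ∀ i, 1 ≤ i → i < n → 1 ≤ c i)
    (hs : ∀ i, i < n → c (i + 1) = c i ∨ c (i + 1) = c i + 1 ∨ c i = c (i + 1) + 1)
    (x y : ℕ) (hx1 : 1 ≤ x) (hx2 : x ≤ n) (hy1 : 1 ≤ y) (hy2 : y ≤ n)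
    (h : posn n c y = (posn n c x + 1) % n) :
    (isV c x ∧ isP c y ∧ x < y) ∨ (¬ isV c x ∧ ¬ isP c y ∧ y < x) := by
  have hI := count_inv n c c0 hs
  obtain ⟨k, hk1, hk2, hf⟩ := posn_facts n hn c c0 cn hc hs
  have hcx := hf x hx1 hx2
  have hcy := hf y hy1 hy2
  have hpx : posn n c x < n := by rcases hcx with hh | hh | hh <;> omega
  have hne : x ≠ y := by
    rintro rfl
    rcases Nat.lt_or_ge (posn n c x + 1) n with h1 | h1
    · rw [Nat.mod_eq_of_lt h1] at h; omega
    · rw [show posn n c x + 1 = n by omega, Nat.mod_self] at h; omega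
  have hmod : (posn n c x + 1 < n ∧ posn n c y = posn n c x + 1) ∨
      (posn n c x + 1 = n ∧ posn n c y = 0) := by
    rcases Nat.lt_or_ge (posn n c x + 1) n with h1 | h1
    · rw [Nat.mod_eq_of_lt h1] at h; omega
    · rw [show posn n c x + 1 = n by omega, Nat.mod_self] at h; omega
  clear h
  rcases hcx with ⟨vx, px, e, lt, z⟩ | ⟨vx, px, e, lt, z⟩ | ⟨vx, px, fx, e, lt, z1, z2⟩
  · rcases hcy with ⟨vy, py, e', lt', z'⟩ | ⟨vy, py, e', lt', z'⟩ | ⟨vy, py, fy, e', lt', z1', z2'⟩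
    · omega
    · left
      refine ⟨vx, py, ?_⟩
      by_contra hlt
      have h1 := (hI y hy2).1
      rw [Nat.count_succ (isP c), if_pos py] at h1
      have h2 : Nat.count (isV c) (y + 1) ≤ Nat.count (isV c) x := Nat.count_monotone _ (by omega)
      omega
    · omega
  · right
    rcases hcy with ⟨vy, py, e', lt', z'⟩ | ⟨vy, py, e', lt', z'⟩ | ⟨vy, py, fy, e', lt', z1', z2'⟩
    · refine ⟨vx, py, ?_⟩
      by_contra hlt
      have h1 := (hI x hx2).1
      rw [Nat.count_succ (isP c), if_pos px] at h1
      have h2 : Nat.count (isV c) (x + 1) ≤ Nat.count (isV c) y := Nat.count_monotone _ (by omega)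
      have h3 := hc x hx1 (by omega)
      omega
    · omega
    · exact ⟨vx, py, by omega⟩
  · right
    rcases hcy with ⟨vy, py, e', lt', z'⟩ | ⟨vy, py, e', lt', z'⟩ | ⟨vy, py, fy, e', lt', z1', z2'⟩
    · exact ⟨vx, py, by omega⟩
    · omega
    · refine ⟨vx, py, ?_⟩
      by_contra hlt
      have h2 : Nat.count (isF c) x ≤ Nat.count (isF c) y := Nat.count_monotone _ (by omega)
      omega

theorem back_core (n : ℕ) (hn : 2 ≤ n) (c : ℕ → ℕ) (c0 : c 0 = 0) (cn : c n = 0)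
    (hc : ∀ i, 1 ≤ i → i < n → 1 ≤ c i)
    (hs : ∀ i, i < n → c (i + 1) = c i ∨ c (i + 1) = c i + 1 ∨ c i = c (i + 1) + 1) :
    ∃ l : Fin n → ℕ, Set.BijOn l Set.univ (Set.Icc 1 n) ∧ ∀ i, i ≤ n → upC n l i = c i := by
  obtain ⟨k, hk1, hk2, hf⟩ := posn_facts n hn c c0 cn hc hs
  have hlt : ∀ x, 1 ≤ x → x ≤ n → posn n c x < n := by
    intro x h1 h2
    rcases hf x h1 h2 with hh | hh | hh <;> omega
  have hinj : ∀ x y, 1 ≤ x → x ≤ n → 1 ≤ y → y ≤ n → posn n c x = posn n c y → x = y := by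
    intro x y hx1 hx2 hy1 hy2 h
    rcases hf x hx1 hx2 with ⟨vx, px, e, lt, z⟩ | ⟨vx, px, e, lt, z⟩ | ⟨vx, px, fx, e, lt, z1, z2⟩ <;>
    rcases hf y hy1 hy2 with ⟨vy, py, e', lt', z'⟩ | ⟨vy, py, e', lt', z'⟩ | ⟨vy, py, fy, e', lt', z1', z2'⟩
    · exact Nat.count_injective vx vy (by omega)
    · omega
    · omega
    · omega
    · exact Nat.count_injective px py (by omega)
    · omega
    · omega
    · omega
    · exact Nat.count_injective fx fy (by omega)
  let g : Fin n → Fin n := fun j => ⟨posn n c (j.val + 1), hlt _ (by omega) (by omega)⟩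
  have gi : Function.Injective g := by
    intro a b h
    have h' : posn n c (a.val + 1) = posn n c (b.val + 1) := congrArg Fin.val h
    have := hinj _ _ (by omega) (by omega) (by omega) (by omega) h'
    ext; omega
  let e := Equiv.ofBijective g (Finite.injective_iff_bijective.mp gi)
  let l : Fin n → ℕ := fun j => (e.symm j).val + 1
  have hpl : ∀ j, posn n c (l j) = j.val := by
    intro j
    have : g (e.symm j) = j := e.apply_symm_apply j
    exact congrArg Fin.val this
  have hr : ∀ j, 1 ≤ l j ∧ l j ≤ n := by
    intro j
    have := (e.symm j).isLt
    simp only [l]; omega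
  have hli : Function.Injective l := by
    intro a b h
    ext
    rw [← hpl a, ← hpl b, h]
  have hsurj : ∀ x, 1 ≤ x → x ≤ n → ∃ j, l j = x := by
    intro x h1 h2
    refine ⟨e ⟨x - 1, by omega⟩, ?_⟩
    simp only [l, Equiv.symm_apply_apply]; omega
  have hedge : ∀ j, (isV c (l j) ∧ isP c (l (cyc j)) ∧ l j < l (cyc j)) ∨
      (¬ isV c (l j) ∧ ¬ isP c (l (cyc j)) ∧ l (cyc j) < l j) := by
    intro j
    apply edge_cmp n hn c c0 cn hc hs _ _ (hr _).1 (hr _).2 (hr _).1 (hr _).2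
    rw [hpl, hpl]; rfl
  refine ⟨l, ⟨fun j _ => hr j, hli.injOn, ?_⟩, ?_⟩
  · intro x hx
    obtain ⟨j, hj⟩ := hsurj x hx.1 hx.2
    exact ⟨j, trivial, hj⟩
  · intro i
    induction i with
    | zero =>
      intro _
      rw [c0]
      unfold upC
      rw [Finset.card_eq_zero, Finset.filter_eq_empty_iff]
      intro j _ h
      have := hr j
      omega
    | succ i ih =>
      intro hi
      have ih := ih (by omega)
      have h1 := up_step n l i
      have hV : kV n l i = if isV c (i + 1) then 1 else 0 := by
        obtain ⟨j, hj⟩ := hsurj (i + 1) (by omega) hi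
        split_ifs with hv
        · apply le_antisymm (kV_le n l hli i)
          unfold kV
          apply Finset.card_pos.mpr
          refine ⟨j, ?_⟩
          rw [← hj] at hv
          rcases hedge j with hh | hh
          · simp only [Finset.mem_filter, Finset.mem_univ, true_and]; omega
          · exact absurd hv hh.1
        · unfold kV
          rw [Finset.card_eq_zero, Finset.filter_eq_empty_iff]
          rintro j _ ⟨h2, h3⟩
          rcases hedge j with hh | hh
          · rw [h2] at hh; exact hv hh.1
          · omega
      have hP : kP n l i = if isP c (i + 1) then 1 else 0 := by
        obtain ⟨j', hj'⟩ := hsurj (i + 1) (by omega) hi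
        obtain ⟨j, rfl⟩ := cyc_bij.2 j'
        split_ifs with hv
        · apply le_antisymm (kP_le n l hli i)
          unfold kP
          apply Finset.card_pos.mpr
          refine ⟨j, ?_⟩
          rw [← hj'] at hv
          rcases hedge j with hh | hh
          · simp only [Finset.mem_filter, Finset.mem_univ, true_and]; omega
          · exact absurd hv hh.2.1
        · unfold kP
          rw [Finset.card_eq_zero, Finset.filter_eq_empty_iff]
          rintro j _ ⟨h2, h3⟩
          rcases hedge j with hh | hh
          · rw [h2] at hh; exact hv hh.2.1
          · omega
      have := hs i (by omega)
      rw [hV, hP] at h1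
      simp only [isV, isP, Nat.add_sub_cancel] at h1
      split_ifs at h1 <;> omega

end back

/-- Characterization of realizable size signatures: a sequence
`(m_1, …, m_{n-1})` of positive integers is realized as the size signature of some
`n`-crossing iff `m_1 = m_{n-1} = 4` and adjacent entries differ by `0` or `4`. -/
theorem realizable_signature_iff
    (n : ℕ) (hn : 2 ≤ n) (m : ℕ → ℕ)
    (hpos : ∀ i, 1 ≤ i → i ≤ n - 1 → 0 < m i) :
    (∃ l : Fin n → ℕ, Set.BijOn l Set.univ (Set.Icc 1 n) ∧
        ∀ i, 1 ≤ i → i ≤ n - 1 → bipSize n l i = m i) ↔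
      (m 1 = 4 ∧ m (n - 1) = 4 ∧
        ∀ i, 1 ≤ i → i ≤ n - 2 →
          |(m i : ℤ) - (m (i + 1) : ℤ)| = 0 ∨ |(m i : ℤ) - (m (i + 1) : ℤ)| = 4) := by
  constructor
  · rintro ⟨l, hb, hm⟩
    exact forward_dir n hn m hpos l hb hm
  · rintro ⟨h1, h2, h3⟩
    have hdiv : ∀ i, 1 ≤ i → i ≤ n - 1 → m i % 4 = 0 := by
      intro i hi
      induction i, hi using Nat.le_induction with
      | base => intro _; omega
      | succ i hi ih =>
        intro hle
        have := ih (by omega)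
        have := h3 i hi (by omega)
        rcases abs_cases ((m i : ℤ) - (m (i + 1) : ℤ)) with hq | hq <;>
        omega
    let c : ℕ → ℕ := fun i => if 1 ≤ i ∧ i ≤ n - 1 then m i / 4 else 0
    have hcv : ∀ i, 1 ≤ i → i ≤ n - 1 → 4 * c i = m i := by
      intro i hi hi'
      have := hdiv i hi hi'
      simp only [c, if_pos (And.intro hi hi')]
      omega
    have c0 : c 0 = 0 := by simp [c]
    have cn : c n = 0 := by
      simp only [c]; rw [if_neg]; omega
    obtain ⟨l, hb, hl⟩ := back_core n hn c c0 cn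
      (by
        intro i hi hi'
        have := hcv i hi (by omega)
        have := hpos i hi (by omega)
        omega)
      (by
        intro i hi
        rcases Nat.eq_zero_or_pos i with rfl | hi0
        · have := hcv 1 le_rfl (by omega)
          simp only [zero_add]
          omega
        · by_cases hin : i = n - 1
          · have := hcv i hi0 (by omega)
            rw [show i + 1 = n by omega, cn]
            rw [← hin] at h2
            omega
          · have := hcv i hi0 (by omega)
            have := hcv (i + 1) (by omega) (by omega)
            have := h3 i hi0 (by omega)
            rcases abs_cases ((m i : ℤ) - (m (i + 1) : ℤ)) with hq | hq <;>
            omega)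
    refine ⟨l, hb, ?_⟩
    intro i hi hi'
    rw [bip_eq, hl i (by omega), hcv i hi hi']
end

section
/- For n = 4, the size signature of every 4-crossing is either (4, 4, 4) or (4, 8, 4): for every bijection l : ℤ/4 → {1,2,3,4}, either m_1(l) = m_2(l) = m_3(l) = 4, or m_1(l) = m_3(l) = 4 and m_2(l) = 8. Moreover, both signatures occur: the cyclic level sequence 1,2,3,4 has signature (4,4,4), and the cyclic level sequence 1,3,2,4 has signature (4,8,4). -/
/-- the size signature of every 4-crossing is `(4,4,4)` or `(4,8,4)`, and
both occur: the cyclic level sequence `1,2,3,4` has signature `(4,4,4)` and the cyclic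
level sequence `1,3,2,4` has signature `(4,8,4)`. -/
theorem quadruple_crossing_signature :
    (∀ l : Fin 4 → ℕ, Set.BijOn l Set.univ (Set.Icc 1 4) →
      ((bipSize 4 l 1 = 4 ∧ bipSize 4 l 2 = 4 ∧ bipSize 4 l 3 = 4) ∨
       (bipSize 4 l 1 = 4 ∧ bipSize 4 l 2 = 8 ∧ bipSize 4 l 3 = 4))) ∧
    (bipSize 4 ![1, 2, 3, 4] 1 = 4 ∧ bipSize 4 ![1, 2, 3, 4] 2 = 4 ∧
      bipSize 4 ![1, 2, 3, 4] 3 = 4) ∧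
    (bipSize 4 ![1, 3, 2, 4] 1 = 4 ∧ bipSize 4 ![1, 3, 2, 4] 2 = 8 ∧
      bipSize 4 ![1, 3, 2, 4] 3 = 4) := by
  refine ⟨?_, by decide, by decide⟩
  intro l hl
  have hm : ∀ j, 1 ≤ l j ∧ l j ≤ 4 := fun j => hl.mapsTo (Set.mem_univ j)
  have hi : ∀ a b, l a = l b → a = b := fun a b h =>
    hl.injOn (Set.mem_univ a) (Set.mem_univ b) h
  have key : ∀ a b c d : Fin 4, a ≠ b → a ≠ c → a ≠ d → b ≠ c → b ≠ d → c ≠ d →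
      let l : Fin 4 → ℕ := ![a.val + 1, b.val + 1, c.val + 1, d.val + 1]
      ((bipSize 4 l 1 = 4 ∧ bipSize 4 l 2 = 4 ∧ bipSize 4 l 3 = 4) ∨
       (bipSize 4 l 1 = 4 ∧ bipSize 4 l 2 = 8 ∧ bipSize 4 l 3 = 4)) := by
    set_option maxRecDepth 100000 in decide
  let g : Fin 4 → Fin 4 := fun j => ⟨l j - 1, by have := hm j; omega⟩
  have hg : ∀ j, (g j).val + 1 = l j := fun j => by
    have := hm j
    change l j - 1 + 1 = l j
    omega
  have hgi : ∀ a b, a ≠ b → g a ≠ g b := fun a b hab h =>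
    hab (hi a b (by rw [← hg a, ← hg b, h]))
  have h := key (g 0) (g 1) (g 2) (g 3) (hgi _ _ (by decide)) (hgi _ _ (by decide))
    (hgi _ _ (by decide)) (hgi _ _ (by decide)) (hgi _ _ (by decide)) (hgi _ _ (by decide))
  have e : (![(g 0).val + 1, (g 1).val + 1, (g 2).val + 1, (g 3).val + 1] : Fin 4 → ℕ) = l := by
    funext j
    fin_cases j <;> exact hg _
  simp only [e] at h
  exact h
end

section
/- (Best-case total signature size.) For every n ≥ 2 there exists a bijection l : ℤ/n → {1,…,n} whose size signature has total sum ∑_{i=1}^{n−1} m_i(l) = 4(n−1), and this is the minimum possible: for every bijection l : ℤ/n → {1,…,n}, ∑_{i=1}^{n−1} m_i(l) ≥ 4(n−1). (In particular the all-4 signature (4,4,…,4) is realized for every n.) -/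
theorem cyc_closed {n : ℕ} (P : Fin n → Prop) (h : ∀ j, P j → P (cyc j)) (a : Fin n) (ha : P a)
    (b : Fin n) : P b := by
  have hpos : 0 < n := Nat.zero_lt_of_lt a.isLt
  have key : ∀ k : ℕ, P ⟨(a.val + k) % n, Nat.mod_lt _ hpos⟩ := by
    intro k
    induction k with
    | zero =>
      have : (⟨(a.val + 0) % n, Nat.mod_lt _ hpos⟩ : Fin n) = a := by
        ext; simp [Nat.mod_eq_of_lt a.isLt]
      rw [this]; exact ha
    | succ k ih =>
      have := h _ ih
      have e : cyc (⟨(a.val + k) % n, Nat.mod_lt _ hpos⟩ : Fin n)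
          = ⟨(a.val + (k + 1)) % n, Nat.mod_lt _ hpos⟩ := by
        ext; simp [cyc, add_assoc]
      rwa [e] at this
  have := key (n - a.val + b.val)
  have e : (⟨(a.val + (n - a.val + b.val)) % n, Nat.mod_lt _ hpos⟩ : Fin n) = b := by
    ext
    have h1 : a.val + (n - a.val + b.val) = b.val + n := by have := a.isLt; omega
    simp [h1, Nat.mod_eq_of_lt b.isLt]
  rwa [e] at this

theorem bip_ge {n : ℕ} (l : Fin n → ℕ) (hl : Set.BijOn l Set.univ (Set.Icc 1 n)) (i : ℕ)
    (h1 : 1 ≤ i) (h2 : i ≤ n - 1) (hn : 2 ≤ n) : 4 ≤ bipSize n l i := by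
  obtain ⟨a, -, ha⟩ := hl.surjOn (show 1 ∈ Set.Icc 1 n from ⟨le_refl _, by omega⟩)
  obtain ⟨b, -, hb⟩ := hl.surjOn (show n ∈ Set.Icc 1 n from ⟨by omega, le_refl _⟩)
  have up : ∃ j, l j ≤ i ∧ i < l (cyc j) := by
    by_contra! hc
    have := cyc_closed (fun j => l j ≤ i) hc a (by omega) b
    omega
  have dn : ∃ j, i < l j ∧ l (cyc j) ≤ i := by
    by_contra! hc
    have := cyc_closed (fun j => i < l j) hc b (by omega) a
    omega
  obtain ⟨x, hx1, hx2⟩ := up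
  obtain ⟨y, hy1, hy2⟩ := dn
  have hxy : x ≠ y := by rintro rfl; omega
  have hs : ({x, y} : Finset (Fin n)) ⊆ Finset.univ.filter fun j : Fin n =>
      min (l j) (l (cyc j)) ≤ i ∧ i + 1 ≤ max (l j) (l (cyc j)) := by
    intro j hj
    simp only [Finset.mem_insert, Finset.mem_singleton] at hj
    rw [Finset.mem_filter]
    rcases hj with rfl | rfl <;> refine ⟨Finset.mem_univ _, ?_, ?_⟩ <;> omega
  have := Finset.card_le_card hs
  rw [Finset.card_pair hxy] at this
  unfold bipSize
  omega

theorem id_bij (n : ℕ) :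
    Set.BijOn (fun j : Fin n => j.val + 1) Set.univ (Set.Icc 1 n) := by
  refine ⟨?_, ?_, ?_⟩
  · intro j _
    have := j.isLt
    simp only [Set.mem_Icc]
    omega
  · intro x _ y _ h
    ext
    simpa using h
  · rintro k ⟨h1, h2⟩
    exact ⟨⟨k - 1, by omega⟩, trivial, by simp only; omega⟩

theorem id_bip (n : ℕ) (hn : 2 ≤ n) (i : ℕ) (h1 : 1 ≤ i) (h2 : i ≤ n - 1) :
    bipSize n (fun j : Fin n => j.val + 1) i = 4 := by
  apply le_antisymm _ (bip_ge _ (id_bij n) i h1 h2 hn)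
  have hs : (Finset.univ.filter fun j : Fin n =>
      min (j.val + 1) ((cyc j).val + 1) ≤ i ∧ i + 1 ≤ max (j.val + 1) ((cyc j).val + 1)) ⊆
      {(⟨i - 1, by omega⟩ : Fin n), ⟨n - 1, by omega⟩} := by
    intro j hj
    rw [Finset.mem_filter] at hj
    obtain ⟨-, ha, hb⟩ := hj
    simp only [Finset.mem_insert, Finset.mem_singleton, Fin.ext_iff]
    by_cases hj : j.val = n - 1
    · right; exact hj
    · left
      have hlt := j.isLt
      have : (cyc j).val = j.val + 1 := Nat.mod_eq_of_lt (by omega)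
      omega
  have := (Finset.card_le_card hs).trans Finset.card_le_two
  exact Nat.mul_le_mul_left 2 this

/-- Best-case total signature size: for every `n ≥ 2` some `n`-crossing
has total signature size `4(n-1)`; this is the minimum over all `n`-crossings; and in
particular the all-4 signature is realized for every `n`. -/
theorem best_case_total_signature_size
    (n : ℕ) (hn : 2 ≤ n) :
    (∃ l : Fin n → ℕ, Set.BijOn l Set.univ (Set.Icc 1 n) ∧
        ∑ i ∈ Finset.Icc 1 (n - 1), bipSize n l i = 4 * (n - 1)) ∧
    (∀ l : Fin n → ℕ, Set.BijOn l Set.univ (Set.Icc 1 n) →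
        4 * (n - 1) ≤ ∑ i ∈ Finset.Icc 1 (n - 1), bipSize n l i) ∧
    (∃ l : Fin n → ℕ, Set.BijOn l Set.univ (Set.Icc 1 n) ∧
        ∀ i, 1 ≤ i → i ≤ n - 1 → bipSize n l i = 4) := by
  refine ⟨⟨_, id_bij n, ?_⟩, ?_, ⟨_, id_bij n, id_bip n hn⟩⟩
  · rw [Finset.sum_congr rfl (g := fun _ => 4)]
    · simp [mul_comm]
    · intro i hi
      rw [Finset.mem_Icc] at hi
      exact id_bip n hn i hi.1 hi.2
  · intro l hl
    have := Finset.card_nsmul_le_sum (Finset.Icc 1 (n - 1)) (fun i => bipSize n l i) 4 (by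
      intro i hi
      rw [Finset.mem_Icc] at hi
      exact bip_ge l hl i hi.1 hi.2 hn)
    simpa [mul_comm] using this
end
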